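/- (Angular momentum bound.) Let K ⊆ U be compact, T₀ ∈ ℝ, c₀ > 0, C₀ > 0, and let (r(t),θ(t),ρ(t),ω(t)) : (−∞,T₀] → (1,∞)×K×ℝ×ℝ^{n-1} be a solution of the Hamiltonian system satisfying r(t) ≥ c₀(1+|t|), |ρ(t)| ≤ C₀ and |ω(t)| ≤ C₀·r(t) for all t ≤ T₀. Set L(t) = Σ_{j,k} h^{jk}(θ(t))ω_j(t)ω_k(t). Then there exists C > 0 with |L'(t)| ≤ C·r(t)^{-1-μ}(1 + L(t)) for all t ≤ T₀, and consequently L(t), and hence |ω(t)|, is bounded uniformly for t ≤ T₀. -/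

import Mathlib

open Real Set Filter Topology

namespace Scattering

/-- The Euclidean norm of a vector in `Fin m → ℝ`. -/
noncomputable def eNorm {m : ℕ} (v : Fin m → ℝ) : ℝ := Real.sqrt (∑ j, v j ^ 2)

/-- Partial derivative in the radial variable of a function of `(r, θ)`. -/
noncomputable def pderivR {m : ℕ} (f : ℝ → (Fin m → ℝ) → ℝ) : ℝ → (Fin m → ℝ) → ℝ :=
  fun r θ => deriv (fun s => f s θ) r

/-- Partial derivative in the `j`-th angular variable of a function of `(r, θ)`. -/
noncomputable def pderivTheta {m : ℕ} (j : Fin m) (f : ℝ → (Fin m → ℝ) → ℝ) :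
    ℝ → (Fin m → ℝ) → ℝ :=
  fun r θ => fderiv ℝ (f r) θ (Pi.single j 1)

/-- Iterated angular derivatives `∂_θ^α` for a multi-index `α` (a list of directions). -/
noncomputable def thetaDerivs {m : ℕ} (α : List (Fin m)) (f : ℝ → (Fin m → ℝ) → ℝ) :
    ℝ → (Fin m → ℝ) → ℝ :=
  α.foldr pderivTheta f

/-- `DecayOn f ν S K` : for all `k, α` there is `C > 0` with
`|∂_r^k ∂_θ^α f(r,θ)| ≤ C r^{-ν-k}` for `r ∈ (S,∞)`, `θ ∈ K`. -/
def DecayOn {m : ℕ} (f : ℝ → (Fin m → ℝ) → ℝ) (ν S : ℝ) (K : Set (Fin m → ℝ)) : Prop :=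
  ∀ (k : ℕ) (α : List (Fin m)), ∃ C > 0, ∀ r ∈ Ioi S, ∀ θ ∈ K,
    |(pderivR (m := m))^[k] (thetaDerivs α f) r θ| ≤ C * r ^ (-ν - (k : ℝ))

/-- The classical kinetic energy function
`p(r,θ,ρ,ω) = ρ² + r⁻²Σ h^{jk} ω_j ω_k + a₀ ρ² + r⁻¹ Σ a₁^j ρ ω_j + r⁻² Σ a₂^{jk} ω_j ω_k`. -/
noncomputable def energy {m : ℕ} (hM : (Fin m → ℝ) → Matrix (Fin m) (Fin m) ℝ)
    (a0 : ℝ → (Fin m → ℝ) → ℝ) (a1 : ℝ → (Fin m → ℝ) → Fin m → ℝ)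
    (a2 : ℝ → (Fin m → ℝ) → Matrix (Fin m) (Fin m) ℝ) :
    ℝ → (Fin m → ℝ) → ℝ → (Fin m → ℝ) → ℝ :=
  fun r θ ρ ω =>
    ρ ^ 2 + (∑ j, ∑ k, hM θ j k * ω j * ω k) / r ^ 2 + a0 r θ * ρ ^ 2
      + (∑ j, a1 r θ j * ρ * ω j) / r + (∑ j, ∑ k, a2 r θ j k * ω j * ω k) / r ^ 2

section PhaseDerivs

variable {m : ℕ} (p : ℝ → (Fin m → ℝ) → ℝ → (Fin m → ℝ) → ℝ)

/-- `∂p/∂r`. -/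
noncomputable def pdR (r : ℝ) (θ : Fin m → ℝ) (ρ : ℝ) (ω : Fin m → ℝ) : ℝ :=
  deriv (fun s => p s θ ρ ω) r

/-- `∂p/∂θ_j`. -/
noncomputable def pdTheta (j : Fin m) (r : ℝ) (θ : Fin m → ℝ) (ρ : ℝ) (ω : Fin m → ℝ) : ℝ :=
  fderiv ℝ (fun θ' => p r θ' ρ ω) θ (Pi.single j 1)

/-- `∂p/∂ρ`. -/
noncomputable def pdRho (r : ℝ) (θ : Fin m → ℝ) (ρ : ℝ) (ω : Fin m → ℝ) : ℝ :=
  deriv (fun s => p r θ s ω) ρ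

/-- `∂p/∂ω_j`. -/
noncomputable def pdOmega (j : Fin m) (r : ℝ) (θ : Fin m → ℝ) (ρ : ℝ) (ω : Fin m → ℝ) : ℝ :=
  fderiv ℝ (fun ω' => p r θ ρ ω') ω (Pi.single j 1)

/-- `(r,θ,ρ,ω)` solves the Hamiltonian system
`ṙ = ∂p/∂ρ, θ̇ = ∂p/∂ω, ρ̇ = -∂p/∂r, ω̇ = -∂p/∂θ` on the set `I` of times. -/
def IsHamSolOn (r : ℝ → ℝ) (θ : ℝ → Fin m → ℝ) (ρ : ℝ → ℝ) (ω : ℝ → Fin m → ℝ)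
    (I : Set ℝ) : Prop :=
  ∀ t ∈ I,
    HasDerivAt r (pdRho p (r t) (θ t) (ρ t) (ω t)) t ∧
    (∀ j, HasDerivAt (fun s => θ s j) (pdOmega p j (r t) (θ t) (ρ t) (ω t)) t) ∧
    HasDerivAt ρ (-pdR p (r t) (θ t) (ρ t) (ω t)) t ∧
    (∀ j, HasDerivAt (fun s => ω s j) (-pdTheta p j (r t) (θ t) (ρ t) (ω t)) t)

/-- The interaction-picture (time-dependent) Hamiltonian `K(t,R,θ,ρ,ω) = ρ² - p(R+2tρ,θ,ρ,ω)`. -/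
noncomputable def Kint (t R : ℝ) (θ : Fin m → ℝ) (ρ : ℝ) (ω : Fin m → ℝ) : ℝ :=
  ρ ^ 2 - p (R + 2 * t * ρ) θ ρ ω

/-- `∂K/∂R`. -/
noncomputable def KdR (t R : ℝ) (θ : Fin m → ℝ) (ρ : ℝ) (ω : Fin m → ℝ) : ℝ :=
  deriv (fun x => Kint p t x θ ρ ω) R

/-- `∂K/∂θ_j`. -/
noncomputable def KdTheta (j : Fin m) (t R : ℝ) (θ : Fin m → ℝ) (ρ : ℝ) (ω : Fin m → ℝ) : ℝ :=
  fderiv ℝ (fun θ' => Kint p t R θ' ρ ω) θ (Pi.single j 1)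

/-- `∂K/∂ρ`. -/
noncomputable def KdRho (t R : ℝ) (θ : Fin m → ℝ) (ρ : ℝ) (ω : Fin m → ℝ) : ℝ :=
  deriv (fun x => Kint p t R θ x ω) ρ

/-- `∂K/∂ω_j`. -/
noncomputable def KdOmega (j : Fin m) (t R : ℝ) (θ : Fin m → ℝ) (ρ : ℝ) (ω : Fin m → ℝ) : ℝ :=
  fderiv ℝ (fun ω' => Kint p t R θ ρ ω') ω (Pi.single j 1)

end PhaseDerivs

/-- The phase space `ℝ × ℝ^m × ℝ × ℝ^m` with coordinates `(R, θ, ρ, ω)`. -/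
abbrev Phase (m : ℕ) : Type := ℝ × (Fin m → ℝ) × ℝ × (Fin m → ℝ)

/-- A curve `f = (R,θ,ρ,ω)` solves the interaction-picture Hamiltonian system
`Ṙ = ∂K/∂ρ, θ̇ = ∂K/∂ω, ρ̇ = -∂K/∂R, ω̇ = -∂K/∂θ` on the set `I` of times. -/
def IsIntSolOn {m : ℕ} (p : ℝ → (Fin m → ℝ) → ℝ → (Fin m → ℝ) → ℝ)
    (f : ℝ → Phase m) (I : Set ℝ) : Prop :=
  ∀ t ∈ I,
    HasDerivAt (fun s => (f s).1) (KdRho p t (f t).1 (f t).2.1 (f t).2.2.1 (f t).2.2.2) t ∧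
    (∀ j, HasDerivAt (fun s => (f s).2.1 j)
      (KdOmega p j t (f t).1 (f t).2.1 (f t).2.2.1 (f t).2.2.2) t) ∧
    HasDerivAt (fun s => (f s).2.2.1)
      (-(KdR p t (f t).1 (f t).2.1 (f t).2.2.1 (f t).2.2.2)) t ∧
    (∀ j, HasDerivAt (fun s => (f s).2.2.2 j)
      (-(KdTheta p j t (f t).1 (f t).2.1 (f t).2.2.1 (f t).2.2.2)) t)

/-- The data of a scattering metric of short-range type on the end `(1,∞) × U`:
the boundary metric `h` (smooth, symmetric, positive definite) and the coefficients
`a₀, a₁, a₂` of the kinetic energy, smooth on `(1,∞) × U` with the short-range decay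
`|∂_r^k ∂_θ^α a₀| ≤ C r^{-1-μ-k}`, `|∂_r^k ∂_θ^α a₁| ≤ C r^{-μ-k}`,
`|∂_r^k ∂_θ^α a₂| ≤ C r^{-μ-k}` on `(1,∞) × K` for every compact `K ⊆ U`. -/
structure Coeffs (m : ℕ) (μ : ℝ) (U : Set (Fin m → ℝ)) where
  hM : (Fin m → ℝ) → Matrix (Fin m) (Fin m) ℝ
  a0 : ℝ → (Fin m → ℝ) → ℝ
  a1 : ℝ → (Fin m → ℝ) → Fin m → ℝ
  a2 : ℝ → (Fin m → ℝ) → Matrix (Fin m) (Fin m) ℝ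
  hM_smooth : ∀ j k, ContDiffOn ℝ (⊤ : ℕ∞) (fun θ => hM θ j k) U
  hM_symm : ∀ θ ∈ U, (hM θ).IsSymm
  hM_posdef : ∀ θ ∈ U, (hM θ).PosDef
  a0_smooth : ContDiffOn ℝ (⊤ : ℕ∞) (fun z : ℝ × (Fin m → ℝ) => a0 z.1 z.2) (Ioi (1:ℝ) ×ˢ U)
  a1_smooth : ∀ j, ContDiffOn ℝ (⊤ : ℕ∞) (fun z : ℝ × (Fin m → ℝ) => a1 z.1 z.2 j) (Ioi (1:ℝ) ×ˢ U)
  a2_smooth : ∀ j k, ContDiffOn ℝ (⊤ : ℕ∞) (fun z : ℝ × (Fin m → ℝ) => a2 z.1 z.2 j k) (Ioi (1:ℝ) ×ˢ U)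
  a2_symm : ∀ r θ j k, a2 r θ j k = a2 r θ k j
  a0_decay : ∀ K : Set (Fin m → ℝ), IsCompact K → K ⊆ U → DecayOn a0 (1 + μ) 1 K
  a1_decay : ∀ K : Set (Fin m → ℝ), IsCompact K → K ⊆ U →
    ∀ j, DecayOn (fun r θ => a1 r θ j) μ 1 K
  a2_decay : ∀ K : Set (Fin m → ℝ), IsCompact K → K ⊆ U →
    ∀ j k, DecayOn (fun r θ => a2 r θ j k) μ 1 K

/-- The kinetic energy function associated to the data `c`. -/
noncomputable def Coeffs.p {m : ℕ} {μ : ℝ} {U : Set (Fin m → ℝ)} (c : Coeffs m μ U) :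
    ℝ → (Fin m → ℝ) → ℝ → (Fin m → ℝ) → ℝ :=
  energy c.hM c.a0 c.a1 c.a2



theorem fin_unif {ι : Type*} [Fintype ι] (P : ι → ℝ → Prop)
    (hmono : ∀ i C D, C ≤ D → P i C → P i D) (h : ∀ i, ∃ C > 0, P i C) :
    ∃ C > 0, ∀ i, P i C := by
  choose f hf hP using h
  refine ⟨1 + ∑ i, f i, ?_, fun i => hmono i (f i) _ ?_ (hP i)⟩
  · have := Finset.sum_nonneg (fun i (_ : i ∈ Finset.univ) => (hf i).le)
    linarith
  · have := Finset.single_le_sum (fun i _ => (hf i).le) (Finset.mem_univ i)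
    linarith

theorem cpt_bound {m : ℕ} {K : Set (Fin m → ℝ)} (hK : IsCompact K) (f : (Fin m → ℝ) → ℝ)
    (hf : ContinuousOn f K) : ∃ C > 0, ∀ θ ∈ K, |f θ| ≤ C := by
  obtain ⟨C, hC⟩ := hK.exists_bound_of_continuousOn hf
  exact ⟨|C| + 1, by positivity, fun θ hθ => (hC θ hθ).trans (by linarith [le_abs_self C])⟩

theorem norm_le_eNorm {m : ℕ} (v : Fin m → ℝ) : ‖v‖ ≤ eNorm v := by
  refine (pi_norm_le_iff_of_nonneg (Real.sqrt_nonneg _)).2 fun i => ?_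
  rw [Real.norm_eq_abs, ← Real.sqrt_sq_eq_abs]
  exact Real.sqrt_le_sqrt (Finset.single_le_sum (f := fun j => v j ^ 2)
    (fun j _ => sq_nonneg _) (Finset.mem_univ i))

theorem coord_le {m : ℕ} (v : Fin m → ℝ) (i : Fin m) : |v i| ≤ ‖v‖ := norm_le_pi_norm v i

theorem eNorm_le {m : ℕ} (v : Fin m → ℝ) : eNorm v ≤ Real.sqrt m * ‖v‖ := by
  rw [← Real.sqrt_sq (norm_nonneg v), ← Real.sqrt_mul (by positivity)]
  refine Real.sqrt_le_sqrt ?_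
  calc ∑ j, v j ^ 2 ≤ ∑ _j : Fin m, ‖v‖ ^ 2 := Finset.sum_le_sum fun j _ => by
        rw [← sq_abs]; exact pow_le_pow_left₀ (abs_nonneg _) (coord_le v j) 2
    _ = _ := by simp

theorem sum_bound {m : ℕ} (f : Fin m → ℝ) (B : ℝ) (h : ∀ i, |f i| ≤ B) :
    |∑ i, f i| ≤ m * B := by
  calc |∑ i, f i| ≤ ∑ i, |f i| := Finset.abs_sum_le_sum_abs _ _
    _ ≤ ∑ _i : Fin m, B := Finset.sum_le_sum fun i _ => h i
    _ = _ := by simp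

theorem coercive {m : ℕ} {U : Set (Fin m → ℝ)} {K : Set (Fin m → ℝ)} (hK : IsCompact K)
    (hKU : K ⊆ U) (hM : (Fin m → ℝ) → Matrix (Fin m) (Fin m) ℝ)
    (hc : ∀ j k, ContinuousOn (fun θ => hM θ j k) U)
    (hp : ∀ θ ∈ U, (hM θ).PosDef) :
    ∃ l > 0, ∀ θ ∈ K, ∀ v : Fin m → ℝ, l * ‖v‖ ^ 2 ≤ ∑ j, ∑ k, hM θ j k * v j * v k := by
  have hpos : ∀ θ ∈ K, ∀ v : Fin m → ℝ, v ≠ 0 → 0 < ∑ j, ∑ k, hM θ j k * v j * v k := by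
    intro θ hθ v hv
    have := (hp θ (hKU hθ)).dotProduct_mulVec_pos hv
    simp only [dotProduct, Matrix.mulVec, Finset.mul_sum, Pi.star_apply, star_trivial] at this
    refine this.trans_eq ?_
    exact Finset.sum_congr rfl fun j _ => Finset.sum_congr rfl fun k _ => by ring
  have hcpt : IsCompact (K ×ˢ Metric.sphere (0 : Fin m → ℝ) 1) :=
    hK.prod (isCompact_sphere _ _)
  have hcont : ContinuousOn (fun z : (Fin m → ℝ) × (Fin m → ℝ) =>
      ∑ j, ∑ k, hM z.1 j k * z.2 j * z.2 k) (K ×ˢ Metric.sphere (0 : Fin m → ℝ) 1) := by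
    refine continuousOn_finsetSum _ fun j _ => continuousOn_finsetSum _ fun k _ => ?_
    have h1 : ContinuousOn (fun z : (Fin m → ℝ) × (Fin m → ℝ) => hM z.1 j k)
        (K ×ˢ Metric.sphere (0 : Fin m → ℝ) 1) :=
      ((hc j k).mono hKU).comp continuousOn_fst (fun z hz => hz.1)
    exact (h1.mul (by fun_prop)).mul (by fun_prop)
  obtain ⟨l, hl, hl'⟩ : ∃ l > 0, ∀ z ∈ K ×ˢ Metric.sphere (0 : Fin m → ℝ) 1,
      l ≤ ∑ j, ∑ k, hM z.1 j k * z.2 j * z.2 k := by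
    rcases (K ×ˢ Metric.sphere (0 : Fin m → ℝ) 1).eq_empty_or_nonempty with he | hne
    · exact ⟨1, one_pos, by simp [he]⟩
    · obtain ⟨z, hz, hmin⟩ := hcpt.exists_isMinOn hne hcont
      refine ⟨_, hpos z.1 hz.1 z.2 ?_, fun w hw => hmin hw⟩
      intro h0
      have := hz.2
      simp [h0] at this
  refine ⟨l, hl, fun θ hθ v => ?_⟩
  by_cases hv : v = 0
  · simp [hv]
  have hn : 0 < ‖v‖ := norm_pos_iff.2 hv
  have h := hl' (θ, ‖v‖⁻¹ • v) ⟨hθ, by simp [norm_smul, hn.ne']⟩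
  have e : ∑ j, ∑ k, hM θ j k * (‖v‖⁻¹ • v) j * (‖v‖⁻¹ • v) k
      = (‖v‖ ^ 2)⁻¹ * ∑ j, ∑ k, hM θ j k * v j * v k := by
    simp only [Finset.mul_sum, Pi.smul_apply, smul_eq_mul]
    refine Finset.sum_congr rfl fun j _ => Finset.sum_congr rfl fun k _ => ?_
    field_simp
  simp only at h
  rw [e, inv_mul_eq_div, le_div_iff₀ (by positivity)] at h
  exact h

theorem hasFDerivAt_quad {m : ℕ} (A : Fin m → Fin m → ℝ) (ω : Fin m → ℝ)
    (hA : ∀ j k, A j k = A k j) (l : Fin m) :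
    DifferentiableAt ℝ (fun w : Fin m → ℝ => ∑ j, ∑ k, A j k * w j * w k) ω ∧
    fderiv ℝ (fun w : Fin m → ℝ => ∑ j, ∑ k, A j k * w j * w k) ω (Pi.single l 1)
      = 2 * ∑ k, A l k * ω k := by
  have key : HasFDerivAt (fun w : Fin m → ℝ => ∑ j, ∑ k, A j k * w j * w k)
      (∑ j, ∑ k, ((A j k * ω j) • ContinuousLinearMap.proj (R := ℝ) (φ := fun _ : Fin m => ℝ) k +
        ω k • (A j k • ContinuousLinearMap.proj (R := ℝ) (φ := fun _ : Fin m => ℝ) j))) ω := by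
    refine HasFDerivAt.fun_sum fun j _ => HasFDerivAt.fun_sum fun k _ => ?_
    exact ((hasFDerivAt_apply j ω).const_mul (A j k)).mul (hasFDerivAt_apply k ω)
  refine ⟨key.differentiableAt, ?_⟩
  rw [key.fderiv]
  simp only [sum_apply, add_apply,
    smul_apply, ContinuousLinearMap.proj_apply, smul_eq_mul,
    Finset.sum_add_distrib, Pi.single_apply, mul_ite, mul_one, mul_zero, Finset.sum_ite_eq',
    Finset.mem_univ, if_true]
  rw [Finset.sum_comm (f := fun j k => if j = l then ω k * A j k else 0)]
  simp only [Finset.sum_ite_eq', Finset.mem_univ, if_true]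
  rw [two_mul]
  congr 1
  · exact Finset.sum_congr rfl fun k _ => by rw [hA]
  · exact Finset.sum_congr rfl fun k _ => by ring

section Traj

variable {m : ℕ} {μ : ℝ} {U : Set (Fin m → ℝ)} (c : Coeffs m μ U)

theorem pdOmega_eq (r : ℝ) (θ : Fin m → ℝ) (ρ : ℝ) (ω : Fin m → ℝ) (hθ : θ ∈ U) (l : Fin m) :
    pdOmega c.p l r θ ρ ω = 2 * (∑ k, c.hM θ l k * ω k) / r ^ 2 +
      (c.a1 r θ l * ρ / r + 2 * (∑ k, c.a2 r θ l k * ω k) / r ^ 2) := by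
  have hs : ∀ j k, c.hM θ j k = c.hM θ k j := fun j k => (c.hM_symm θ hθ).apply k j
  obtain ⟨d1, e1⟩ := hasFDerivAt_quad (c.hM θ) ω hs l
  obtain ⟨d2, e2⟩ := hasFDerivAt_quad (c.a2 r θ) ω (c.a2_symm r θ) l
  have k3 : HasFDerivAt (fun w : Fin m → ℝ => ∑ j, c.a1 r θ j * ρ * w j)
      (∑ j, (c.a1 r θ j * ρ) • ContinuousLinearMap.proj (R := ℝ) (φ := fun _ : Fin m => ℝ) j) ω :=
    HasFDerivAt.fun_sum fun j _ => (hasFDerivAt_apply j ω).const_mul _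
  have key := ((((d1.hasFDerivAt.mul_const (r ^ 2)⁻¹).const_add (ρ ^ 2)).add_const
    (c.a0 r θ * ρ ^ 2)).add (k3.mul_const r⁻¹)).add (d2.hasFDerivAt.mul_const (r ^ 2)⁻¹)
  have : pdOmega c.p l r θ ρ ω = fderiv ℝ (fun w => c.p r θ ρ w) ω (Pi.single l 1) := rfl
  rw [this]
  rw [HasFDerivAt.fderiv (f := fun w => c.p r θ ρ w) key]
  simp only [sum_apply, add_apply,
    smul_apply, ContinuousLinearMap.proj_apply, smul_eq_mul, e1, e2,
    Pi.single_apply, mul_ite, mul_one, mul_zero, Finset.sum_ite_eq',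
    Finset.mem_univ, if_true]
  ring

theorem pdTheta_eq (hU : IsOpen U) (r : ℝ) (hr : 1 < r) (θ : Fin m → ℝ) (ρ : ℝ) (ω : Fin m → ℝ)
    (hθ : θ ∈ U) (l : Fin m) :
    pdTheta c.p l r θ ρ ω =
      (∑ j, ∑ k, fderiv ℝ (fun x => c.hM x j k) θ (Pi.single l 1) * ω j * ω k) / r ^ 2 +
      (fderiv ℝ (c.a0 r) θ (Pi.single l 1) * ρ ^ 2 +
       (∑ j, fderiv ℝ (fun x => c.a1 r x j) θ (Pi.single l 1) * ρ * ω j) / r +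
       (∑ j, ∑ k, fderiv ℝ (fun x => c.a2 r x j k) θ (Pi.single l 1) * ω j * ω k) / r ^ 2) := by
  have hz : Ioi (1:ℝ) ×ˢ U ∈ 𝓝 (r, θ) := (isOpen_Ioi.prod hU).mem_nhds ⟨hr, hθ⟩
  have hg : DifferentiableAt ℝ (fun x : Fin m → ℝ => (r, x)) θ := by fun_prop
  have dh : ∀ j k, DifferentiableAt ℝ (fun x => c.hM x j k) θ := fun j k =>
    ((c.hM_smooth j k).contDiffAt (hU.mem_nhds hθ)).differentiableAt (by simp)
  have d0 : DifferentiableAt ℝ (c.a0 r) θ :=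
    ((c.a0_smooth.contDiffAt hz).differentiableAt (by simp)).comp θ hg
  have d1 : ∀ j, DifferentiableAt ℝ (fun x => c.a1 r x j) θ := fun j =>
    (((c.a1_smooth j).contDiffAt hz).differentiableAt (by simp)).comp θ hg
  have d2 : ∀ j k, DifferentiableAt ℝ (fun x => c.a2 r x j k) θ := fun j k =>
    (((c.a2_smooth j k).contDiffAt hz).differentiableAt (by simp)).comp θ hg
  have kh := HasFDerivAt.fun_sum (u := Finset.univ) fun j _ => HasFDerivAt.fun_sum
    (u := Finset.univ) fun k _ => ((dh j k).hasFDerivAt.mul_const (ω j)).mul_const (ω k)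
  have k2 := HasFDerivAt.fun_sum (u := Finset.univ) fun j _ => HasFDerivAt.fun_sum
    (u := Finset.univ) fun k _ => ((d2 j k).hasFDerivAt.mul_const (ω j)).mul_const (ω k)
  have k1 := HasFDerivAt.fun_sum (u := Finset.univ) fun j _ =>
    ((d1 j).hasFDerivAt.mul_const ρ).mul_const (ω j)
  have key := ((((kh.mul_const (r ^ 2)⁻¹).const_add (ρ ^ 2)).add
    (d0.hasFDerivAt.mul_const (ρ ^ 2))).add (k1.mul_const r⁻¹)).add (k2.mul_const (r ^ 2)⁻¹)
  have : pdTheta c.p l r θ ρ ω = fderiv ℝ (fun x => c.p r x ρ ω) θ (Pi.single l 1) := rfl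
  rw [this]
  rw [HasFDerivAt.fderiv (f := fun x => c.p r x ρ ω) key]
  simp only [sum_apply, add_apply,
    smul_apply, smul_eq_mul]
  have comm2 : ∀ f : Fin m → Fin m → ℝ, ∑ j, ∑ k, ω k * (ω j * f j k) =
      ∑ j, ∑ k, f j k * ω j * ω k := fun f =>
    Finset.sum_congr rfl fun j _ => Finset.sum_congr rfl fun k _ => by ring
  have comm1 : ∀ f : Fin m → ℝ, ∑ j, ω j * (ρ * f j) = ∑ j, f j * ρ * ω j := fun f =>
    Finset.sum_congr rfl fun j _ => by ring
  rw [comm2, comm2, comm1]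
  ring

theorem L_deriv (hU : IsOpen U) (r : ℝ → ℝ) (θ : ℝ → Fin m → ℝ) (ρ : ℝ → ℝ)
    (ω : ℝ → Fin m → ℝ) (t : ℝ) (θ' ω' g G : Fin m → ℝ) (hθ : θ t ∈ U)
    (h1 : ∀ j, HasDerivAt (fun s => θ s j) (θ' j) t)
    (h2 : ∀ j, HasDerivAt (fun s => ω s j) (ω' j) t)
    (hg : ∀ l, g l = ∑ k, c.hM (θ t) l k * ω t k)
    (hG : ∀ l, G l = ∑ j, ∑ k, fderiv ℝ (fun x => c.hM x j k) (θ t) (Pi.single l 1)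
      * ω t j * ω t k) :
    HasDerivAt (fun s => ∑ j, ∑ k, c.hM (θ s) j k * ω s j * ω s k)
      (∑ l, (θ' l * G l + 2 * ω' l * g l)) t := by
  have hs : ∀ j k, c.hM (θ t) j k = c.hM (θ t) k j := fun j k => (c.hM_symm _ hθ).apply k j
  have dθ : HasDerivAt θ θ' t := hasDerivAt_pi.2 h1
  have dh : ∀ j k, HasDerivAt (fun s => c.hM (θ s) j k)
      (∑ l, θ' l * fderiv ℝ (fun x => c.hM x j k) (θ t) (Pi.single l 1)) t := by
    intro j k
    have hd : DifferentiableAt ℝ (fun x => c.hM x j k) (θ t) :=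
      ((c.hM_smooth j k).contDiffAt (hU.mem_nhds hθ)).differentiableAt (by simp)
    have := hd.hasFDerivAt.comp_hasDerivAt t dθ
    refine this.congr_deriv ?_
    have hv : θ' = ∑ l, θ' l • (Pi.single l 1 : Fin m → ℝ) := by
      funext i
      simp [Finset.sum_apply, Pi.single_apply]
    calc fderiv ℝ (fun x => c.hM x j k) (θ t) θ'
        = fderiv ℝ (fun x => c.hM x j k) (θ t) (∑ l, θ' l • (Pi.single l 1 : Fin m → ℝ)) := by
          rw [← hv]
      _ = _ := by simp only [map_sum, map_smul, smul_eq_mul]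
  have key := HasDerivAt.fun_sum (u := Finset.univ) fun j _ => HasDerivAt.fun_sum
    (u := Finset.univ) fun k _ => ((dh j k).mul (h2 j)).mul (h2 k)
  refine key.congr_deriv ?_
  simp only [Pi.mul_apply, add_mul, Finset.sum_add_distrib]
  have e1 : ∑ j, ∑ k, (∑ l, θ' l * fderiv ℝ (fun x => c.hM x j k) (θ t) (Pi.single l 1))
      * ω t j * ω t k = ∑ l, θ' l * G l := by
    simp only [hG, Finset.mul_sum, Finset.sum_mul]
    conv_rhs => rw [Finset.sum_comm]
    refine Finset.sum_congr rfl fun j _ => ?_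
    conv_rhs => rw [Finset.sum_comm]
    refine Finset.sum_congr rfl fun k _ => Finset.sum_congr rfl fun l _ => ?_
    ring
  have e2 : ∑ j, ∑ k, c.hM (θ t) j k * ω' j * ω t k = ∑ l, ω' l * g l := by
    simp only [hg, Finset.mul_sum]
    exact Finset.sum_congr rfl fun j _ => Finset.sum_congr rfl fun k _ => by ring
  have e3 : ∑ j, ∑ k, c.hM (θ t) j k * ω t j * ω' k = ∑ l, ω' l * g l := by
    rw [Finset.sum_comm]
    simp only [hg, Finset.mul_sum]
    exact Finset.sum_congr rfl fun j _ => Finset.sum_congr rfl fun k _ => by rw [hs]; ring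
  rw [e1, e2, e3]
  simp only [mul_assoc, ← Finset.mul_sum]
  ring

end Traj

theorem decay0 {m : ℕ} {f : ℝ → (Fin m → ℝ) → ℝ} {ν : ℝ} {K : Set (Fin m → ℝ)}
    (h : DecayOn f ν 1 K) : ∃ C > 0, ∀ r ∈ Ioi (1:ℝ), ∀ θ ∈ K, |f r θ| ≤ C * r ^ (-ν) := by
  obtain ⟨C, hC, h⟩ := h 0 []
  refine ⟨C, hC, fun r hr θ hθ => ?_⟩
  have := h r hr θ hθ
  simpa [thetaDerivs] using this

theorem decay1 {m : ℕ} {f : ℝ → (Fin m → ℝ) → ℝ} {ν : ℝ} {K : Set (Fin m → ℝ)}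
    (h : DecayOn f ν 1 K) (l : Fin m) : ∃ C > 0, ∀ r ∈ Ioi (1:ℝ), ∀ θ ∈ K,
      |fderiv ℝ (f r) θ (Pi.single l 1)| ≤ C * r ^ (-ν) := by
  obtain ⟨C, hC, h⟩ := h 0 [l]
  refine ⟨C, hC, fun r hr θ hθ => ?_⟩
  have := h r hr θ hθ
  simpa [thetaDerivs, pderivTheta] using this

theorem unif_decay {ι : Type*} [Fintype ι] {m : ℕ} {K : Set (Fin m → ℝ)} {ν : ℝ}
    (f : ι → ℝ → (Fin m → ℝ) → ℝ)
    (h : ∀ i, ∃ C > 0, ∀ r ∈ Ioi (1:ℝ), ∀ θ ∈ K, |f i r θ| ≤ C * r ^ (-ν)) :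
    ∃ C > 0, ∀ i, ∀ r ∈ Ioi (1:ℝ), ∀ θ ∈ K, |f i r θ| ≤ C * r ^ (-ν) := by
  refine fin_unif _ ?_ h
  intro i C D hCD hP r hr θ hθ
  have : (0:ℝ) < r := lt_trans one_pos hr
  exact (hP r hr θ hθ).trans (mul_le_mul_of_nonneg_right hCD (by positivity))

theorem E_bound {m : ℕ} {A Y C₀ r ρ a : ℝ} {b ω : Fin m → ℝ} (hA : 0 < A) (hY : 0 < Y)
    (hC : 0 < C₀) (hr : 1 < r) (hρ : |ρ| ≤ C₀) (hω : ‖ω‖ ≤ C₀ * r)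
    (ha : |a| ≤ A * Y) (hb : ∀ k, |b k| ≤ A * Y) :
    |a * ρ / r + 2 * (∑ k, b k * ω k) / r ^ 2| ≤ (A * C₀ + 2 * m * A * C₀) * (Y / r) := by
  have hr0 : 0 < r := by linarith
  have h1 : |a * ρ / r| ≤ A * C₀ * (Y / r) := by
    rw [abs_div, abs_mul, abs_of_pos hr0]
    calc |a| * |ρ| / r ≤ (A * Y) * C₀ / r := by gcongr
      _ = _ := by ring
  have h2 : |∑ k, b k * ω k| ≤ m * ((A * Y) * (C₀ * r)) := sum_bound _ _ fun k => by
    rw [abs_mul]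
    exact mul_le_mul (hb k) ((coord_le ω k).trans hω) (abs_nonneg _) (by positivity)
  have h3 : |2 * (∑ k, b k * ω k) / r ^ 2| ≤ 2 * m * A * C₀ * (Y / r) := by
    rw [abs_div, abs_mul, abs_of_pos (show (0:ℝ) < r ^ 2 by positivity), abs_two]
    calc 2 * |∑ k, b k * ω k| / r ^ 2 ≤ 2 * (m * ((A * Y) * (C₀ * r))) / r ^ 2 := by gcongr
      _ = _ := by field_simp
  calc _ ≤ _ := abs_add_le _ _
    _ ≤ _ := add_le_add h1 h3
    _ = _ := by ring

theorem quad_bound {m : ℕ} {B N : ℝ} {b : Fin m → Fin m → ℝ} {ω : Fin m → ℝ} (hB : 0 ≤ B)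
    (hN : ‖ω‖ = N) (hb : ∀ j k, |b j k| ≤ B) :
    |∑ j, ∑ k, b j k * ω j * ω k| ≤ m * (m * (B * N * N)) := by
  subst hN
  refine sum_bound _ _ fun j => sum_bound _ _ fun k => ?_
  rw [abs_mul, abs_mul]
  have := hb j k
  have := coord_le ω j
  have := coord_le ω k
  gcongr

theorem F_bound {m : ℕ} {A Y C₀ r ρ a : ℝ} {b ω : Fin m → ℝ} {d : Fin m → Fin m → ℝ}
    (hA : 0 < A) (hY : 0 < Y)
    (hC : 0 < C₀) (hr : 1 < r) (hρ : |ρ| ≤ C₀) (hω : ‖ω‖ ≤ C₀ * r)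
    (ha : |a| ≤ A * (Y / r)) (hb : ∀ k, |b k| ≤ A * Y) (hd : ∀ j k, |d j k| ≤ A * Y) :
    |a * ρ ^ 2 + (∑ k, b k * ρ * ω k) / r + (∑ j, ∑ k, d j k * ω j * ω k) / r ^ 2|
      ≤ (A * C₀ ^ 2 + (m * A * C₀ + m * m * A * C₀) * ‖ω‖) * (Y / r) := by
  have hr0 : 0 < r := by linarith
  have h1 : |a * ρ ^ 2| ≤ A * C₀ ^ 2 * (Y / r) := by
    rw [abs_mul, abs_pow]
    calc |a| * |ρ| ^ 2 ≤ (A * (Y / r)) * C₀ ^ 2 := by gcongr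
      _ = _ := by ring
  have h2 : |∑ k, b k * ρ * ω k| ≤ m * ((A * Y) * C₀ * ‖ω‖) := sum_bound _ _ fun k => by
    rw [abs_mul, abs_mul]
    have := hb k
    have := coord_le ω k
    gcongr
  have h3 : |(∑ k, b k * ρ * ω k) / r| ≤ m * A * C₀ * ‖ω‖ * (Y / r) := by
    rw [abs_div, abs_of_pos hr0]
    calc |∑ k, b k * ρ * ω k| / r ≤ m * ((A * Y) * C₀ * ‖ω‖) / r := by gcongr
      _ = _ := by ring
  have h4 := quad_bound (ω := ω) (by positivity) rfl hd
  have h5 : |(∑ j, ∑ k, d j k * ω j * ω k) / r ^ 2| ≤ m * m * A * C₀ * ‖ω‖ * (Y / r) := by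
    rw [abs_div, abs_of_pos (show (0:ℝ) < r ^ 2 by positivity)]
    calc |∑ j, ∑ k, d j k * ω j * ω k| / r ^ 2 ≤ m * (m * (A * Y * ‖ω‖ * ‖ω‖)) / r ^ 2 := by gcongr
      _ ≤ m * (m * (A * Y * ‖ω‖ * (C₀ * r))) / r ^ 2 := by gcongr
      _ = _ := by field_simp
  calc _ ≤ _ := abs_add_le _ _
    _ ≤ _ := add_le_add ((abs_add_le _ _).trans (add_le_add h1 h3)) h5
    _ = _ := by ring

theorem L_bound {m : ℕ} {H X N e f₀ f₁ : ℝ} {E F g G : Fin m → ℝ} (hH : 0 < H) (hX : 0 < X)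
    (hN : 0 ≤ N) (he : 0 ≤ e) (hf₀ : 0 ≤ f₀) (hf₁ : 0 ≤ f₁)
    (hE : ∀ l, |E l| ≤ e * X) (hF : ∀ l, |F l| ≤ (f₀ + f₁ * N) * X)
    (hg : ∀ l, |g l| ≤ m * (H * N)) (hG : ∀ l, |G l| ≤ m * (m * (H * N * N))) :
    |∑ l, (E l * G l - 2 * F l * g l)| ≤
      (m * (m * m * e * H + 2 * m * H * (f₀ + f₁))) * X * (1 + N ^ 2) := by
  have h : ∀ l, |E l * G l - 2 * F l * g l| ≤
      (m * m * e * H + 2 * m * H * (f₀ + f₁)) * X * (1 + N ^ 2) := by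
    intro l
    have h1 : |E l * G l| ≤ (e * X) * (m * (m * (H * N * N))) := by
      rw [abs_mul]
      exact mul_le_mul (hE l) (hG l) (abs_nonneg _) (by positivity)
    have h2 : |2 * F l * g l| ≤ 2 * ((f₀ + f₁ * N) * X) * (m * (H * N)) := by
      rw [abs_mul, abs_mul, abs_two]
      have := hF l
      have := hg l
      gcongr
    have n1 : N ≤ 1 + N ^ 2 := by nlinarith
    have n2 : N ^ 2 ≤ 1 + N ^ 2 := by linarith
    calc |E l * G l - 2 * F l * g l| ≤ |E l * G l| + |2 * F l * g l| := by
          simpa only [Real.norm_eq_abs] using norm_sub_le (E l * G l) (2 * F l * g l)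
      _ ≤ _ := add_le_add h1 h2
      _ = (m * m * e * H * X) * N ^ 2 + (2 * m * H * f₀ * X) * N
          + (2 * m * H * f₁ * X) * N ^ 2 := by ring
      _ ≤ (m * m * e * H * X) * (1 + N ^ 2) + (2 * m * H * f₀ * X) * (1 + N ^ 2)
          + (2 * m * H * f₁ * X) * (1 + N ^ 2) := by gcongr
      _ = _ := by ring
  refine (sum_bound _ _ h).trans_eq (by ring)

theorem gronwall {μ T₀ c₀ C : ℝ} (hμ : 0 < μ) (hc₀ : 0 < c₀) (hC : 0 < C) (r L : ℝ → ℝ)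
    (hr : ∀ t ≤ T₀, c₀ * (1 + |t|) ≤ r t) (hL : ∀ t ≤ T₀, 0 ≤ L t)
    (hd : ∀ t ≤ T₀, ∃ L' : ℝ, HasDerivAt L L' t ∧
      |L'| ≤ C * (r t) ^ (-(1:ℝ) - μ) * (1 + L t)) :
    ∃ B, ∀ t ≤ T₀, L t ≤ B := by
  set T₁ := min T₀ 0 with hT₁
  have hT10 : T₁ ≤ T₀ := min_le_left _ _
  have hT1 : T₁ ≤ 0 := min_le_right _ _
  have hcont : ContinuousOn L (Icc T₁ T₀) := fun t ht => by
    obtain ⟨L', h, _⟩ := hd t ht.2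
    exact h.continuousAt.continuousWithinAt
  obtain ⟨B₁, hB₁⟩ := isCompact_Icc.exists_bound_of_continuousOn hcont
  set M := C * c₀ ^ (-(1:ℝ) - μ) with hM
  set f : ℝ → ℝ := fun t => Real.log (1 + L t) + M / μ * (1 - t) ^ (-μ) with hf
  have hfd : ∀ t ≤ T₁, ∃ f', HasDerivAt f f' t ∧ 0 ≤ f' := by
    intro t ht
    obtain ⟨L', h, hb⟩ := hd t (ht.trans hT10)
    have hL0 := hL t (ht.trans hT10)
    have ht0 : 0 < 1 - t := by linarith
    have d1 := (h.const_add 1).log (by positivity)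
    have d2 := (((hasDerivAt_id t).const_sub 1).rpow_const (p := -μ)
      (Or.inl ht0.ne')).const_mul (M / μ)
    refine ⟨_, d1.add d2, ?_⟩
    have hb2 : |L' / (1 + L t)| ≤ M * (1 - t) ^ (-(1:ℝ) - μ) := by
      rw [abs_div, abs_of_pos (show 0 < 1 + L t by positivity), div_le_iff₀ (by positivity)]
      refine hb.trans ?_
      have hrt := hr t (ht.trans hT10)
      rw [abs_of_nonpos (ht.trans hT1), ← sub_eq_add_neg] at hrt
      have : (r t) ^ (-(1:ℝ) - μ) ≤ (c₀ * (1 - t)) ^ (-(1:ℝ) - μ) :=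
        Real.rpow_le_rpow_of_nonpos (by positivity) hrt (by linarith)
      rw [Real.mul_rpow hc₀.le ht0.le] at this
      rw [hM]
      calc _ ≤ C * (c₀ ^ (-(1:ℝ) - μ) * (1 - t) ^ (-(1:ℝ) - μ)) * (1 + L t) := by gcongr
        _ = _ := by ring
    have := neg_le_of_abs_le hb2
    have e : M / μ * (-1 * -μ * (1 - t) ^ (-μ - 1)) = M * (1 - t) ^ (-(1:ℝ) - μ) := by
      rw [show -μ - 1 = -(1:ℝ) - μ by ring]
      field_simp
    simp only [id] at *
    rw [e]
    linarith
  have hmono : MonotoneOn f (Iic T₁) := by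
    refine monotoneOn_of_deriv_nonneg (convex_Iic _) ?_ ?_ ?_
    · intro t ht
      obtain ⟨f', h, _⟩ := hfd t ht
      exact h.continuousAt.continuousWithinAt
    · intro t ht
      obtain ⟨f', h, _⟩ := hfd t (interior_subset (s := Iic T₁) ht)
      exact h.differentiableAt.differentiableWithinAt
    · intro t ht
      obtain ⟨f', h, h0⟩ := hfd t (interior_subset (s := Iic T₁) ht)
      rw [h.deriv]; exact h0
  refine ⟨max B₁ (Real.exp (f T₁)), fun t ht => ?_⟩
  rcases le_total t T₁ with h | h
  · refine le_max_of_le_right ?_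
    have h1 : f t ≤ f T₁ := hmono h (le_refl T₁) h
    have ht0 : 0 < 1 - t := by linarith
    have hL0 := hL t ht
    have h2 : Real.log (1 + L t) ≤ f t := by
      have : 0 ≤ M / μ * (1 - t) ^ (-μ) := by positivity
      simp only [hf]; linarith
    have := (Real.log_le_iff_le_exp (by positivity)).1 (h2.trans h1)
    linarith
  · exact le_max_of_le_left ((le_abs_self _).trans (hB₁ t ⟨h, ht⟩))

theorem N_bound {l N S : ℝ} (hl : 0 < l) (h1 : l * N ^ 2 ≤ S) :
    1 + N ^ 2 ≤ (1 + l⁻¹) * (1 + S) := by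
  have h2 : N ^ 2 ≤ l⁻¹ * S := by
    rw [inv_mul_eq_div, le_div_iff₀ hl]; linarith
  have h3 : 0 ≤ S := le_trans (by positivity) h1
  have : 0 < l⁻¹ := by positivity
  have h4 : (1 + l⁻¹) * (1 + S) = 1 + S + l⁻¹ + l⁻¹ * S := by ring
  linarith

/-- Angular momentum bound. Along a backward trajectory with linear
escape, the quantity `L(t) = Σ h^{jk}(θ(t)) ω_j(t) ω_k(t)` satisfies
`|L'(t)| ≤ C r(t)^{-1-μ}(1 + L(t))`, and hence `L(t)` and `|ω(t)|` stay bounded. -/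
theorem statement_6 {m : ℕ} (hm : 1 ≤ m) {μ : ℝ} (hμ : μ ∈ Ioo (0:ℝ) 1)
    {U : Set (Fin m → ℝ)} (hU : IsOpen U) (c : Coeffs m μ U)
    (K : Set (Fin m → ℝ)) (hK : IsCompact K) (hKU : K ⊆ U) (T₀ : ℝ)
    (c₀ C₀ : ℝ) (hc₀ : 0 < c₀) (hC₀ : 0 < C₀)
    (r : ℝ → ℝ) (θ : ℝ → Fin m → ℝ) (ρ : ℝ → ℝ) (ω : ℝ → Fin m → ℝ)
    (hsol : IsHamSolOn c.p r θ ρ ω (Iic T₀))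
    (hdom : ∀ t ≤ T₀, r t ∈ Ioi (1:ℝ) ∧ θ t ∈ K ∧ r t ≥ c₀ * (1 + |t|) ∧
      |ρ t| ≤ C₀ ∧ eNorm (ω t) ≤ C₀ * r t) :
    ∃ C > (0:ℝ),
      (∀ t ≤ T₀, ∃ L' : ℝ,
        HasDerivAt (fun s => ∑ j, ∑ k, c.hM (θ s) j k * ω s j * ω s k) L' t ∧
        |L'| ≤ C * (r t) ^ (-(1:ℝ) - μ) *
          (1 + ∑ j, ∑ k, c.hM (θ t) j k * ω t j * ω t k)) ∧
      (∃ B : ℝ, ∀ t ≤ T₀,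
        (∑ j, ∑ k, c.hM (θ t) j k * ω t j * ω t k) ≤ B ∧ eNorm (ω t) ≤ B) := by
  obtain ⟨l, hl, hcoer⟩ := coercive hK hKU c.hM (fun j k => (c.hM_smooth j k).continuousOn)
    c.hM_posdef
  -- bounds on h and its derivatives
  obtain ⟨H₀, hH₀, hb0⟩ := fin_unif (ι := Fin m × Fin m)
    (fun i C => ∀ x ∈ K, |c.hM x i.1 i.2| ≤ C)
    (fun i C D hCD h x hx => (h x hx).trans hCD)
    (fun i => cpt_bound hK _ ((c.hM_smooth i.1 i.2).continuousOn.mono hKU))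
  obtain ⟨H₁, hH₁, hb1⟩ := fin_unif (ι := Fin m × Fin m × Fin m)
    (fun i C => ∀ x ∈ K, |fderiv ℝ (fun y => c.hM y i.1 i.2.1) x (Pi.single i.2.2 1)| ≤ C)
    (fun i C D hCD h x hx => (h x hx).trans hCD)
    (fun i => cpt_bound hK _ ((((c.hM_smooth i.1 i.2.1).continuousOn_fderiv_of_isOpen hU
      (by simp)).mono hKU).clm_apply continuousOn_const))
  -- bounds on the coefficients
  obtain ⟨A1, hA1, ba1⟩ := unif_decay (K := K) (ν := 1 + μ)
    (fun (i : Fin m) r x => fderiv ℝ (c.a0 r) x (Pi.single i 1))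
    (fun i => decay1 (c.a0_decay K hK hKU) i)
  obtain ⟨A2, hA2, ba2⟩ := unif_decay (K := K) (ν := μ) (fun (i : Fin m) r x => c.a1 r x i)
    (fun i => decay0 (c.a1_decay K hK hKU i))
  obtain ⟨A3, hA3, ba3⟩ := unif_decay (K := K) (ν := μ)
    (fun (i : Fin m × Fin m) r x => fderiv ℝ (fun y => c.a1 r y i.1) x (Pi.single i.2 1))
    (fun i => decay1 (c.a1_decay K hK hKU i.1) i.2)
  obtain ⟨A4, hA4, ba4⟩ := unif_decay (K := K) (ν := μ)
    (fun (i : Fin m × Fin m) r x => c.a2 r x i.1 i.2)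
    (fun i => decay0 (c.a2_decay K hK hKU i.1 i.2))
  obtain ⟨A5, hA5, ba5⟩ := unif_decay (K := K) (ν := μ)
    (fun (i : Fin m × Fin m × Fin m) r x =>
      fderiv ℝ (fun y => c.a2 r y i.1 i.2.1) x (Pi.single i.2.2 1))
    (fun i => decay1 (c.a2_decay K hK hKU i.1 i.2.1) i.2.2)
  set H := H₀ + H₁ with hH
  set A := A1 + A2 + A3 + A4 + A5 with hA
  have hH0 : 0 < H := by positivity
  have hA0 : 0 < A := by positivity
  set e := A * C₀ + 2 * m * A * C₀ with he
  set f₁ := m * A * C₀ + m * m * A * C₀ with hf₁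
  set c₁ : ℝ := m * (m * m * e * H + 2 * m * H * (A * C₀ ^ 2 + f₁)) with hc₁
  have hc₁0 : 0 ≤ c₁ := by positivity
  have hLnn : ∀ t ≤ T₀, l * ‖ω t‖ ^ 2 ≤ ∑ j, ∑ k, c.hM (θ t) j k * ω t j * ω t k :=
    fun t ht => hcoer _ (hdom t ht).2.1 _
  have main : ∀ t ≤ T₀, ∃ L' : ℝ,
        HasDerivAt (fun s => ∑ j, ∑ k, c.hM (θ s) j k * ω s j * ω s k) L' t ∧
        |L'| ≤ ((c₁ + 1) * (1 + l⁻¹)) * (r t) ^ (-(1:ℝ) - μ) *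
          (1 + ∑ j, ∑ k, c.hM (θ t) j k * ω t j * ω t k) := by
    intro t ht
    obtain ⟨hr1, hθK, -, hρ, hω⟩ := hdom t ht
    obtain ⟨-, hθ', -, hω'⟩ := hsol t ht
    have hr : 1 < r t := hr1
    have hr0 : 0 < r t := by linarith
    have hY : 0 < (r t) ^ (-μ) := by positivity
    have hX : (r t) ^ (-(1:ℝ) - μ) = (r t) ^ (-μ) / r t := by
      rw [show -(1:ℝ) - μ = -μ - 1 by ring, Real.rpow_sub_one hr0.ne']
    have hωN : ‖ω t‖ ≤ C₀ * r t := (norm_le_eNorm _).trans hω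
    have hX0 : 0 < (r t) ^ (-μ) / r t := by positivity
    have hD := L_deriv c hU r θ ρ ω t _ _ _ _ (hKU hθK) hθ' hω' (fun l => rfl) (fun l => rfl)
    refine ⟨_, hD, ?_⟩
    have hEq := L_bound (m := m) (H := H) (X := (r t) ^ (-μ) / r t) (N := ‖ω t‖)
      (e := e) (f₀ := A * C₀ ^ 2) (f₁ := f₁)
      (E := fun l => c.a1 (r t) (θ t) l * ρ t / r t +
        2 * (∑ k, c.a2 (r t) (θ t) l k * ω t k) / r t ^ 2)
      (F := fun l => fderiv ℝ (c.a0 (r t)) (θ t) (Pi.single l 1) * ρ t ^ 2 +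
       (∑ j, fderiv ℝ (fun x => c.a1 (r t) x j) (θ t) (Pi.single l 1) * ρ t * ω t j) / r t +
       (∑ j, ∑ k, fderiv ℝ (fun x => c.a2 (r t) x j k) (θ t) (Pi.single l 1) * ω t j * ω t k)
         / r t ^ 2)
      (g := fun l => ∑ k, c.hM (θ t) l k * ω t k)
      (G := fun l => ∑ j, ∑ k, fderiv ℝ (fun x => c.hM x j k) (θ t) (Pi.single l 1)
        * ω t j * ω t k) hH0 hX0 (norm_nonneg _) (by positivity) (by positivity) (by positivity)
      (fun l => E_bound hA0 hY hC₀ hr hρ hωN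
        ((ba2 l _ hr1 _ hθK).trans (by gcongr; linarith))
        (fun k => (ba4 (l, k) _ hr1 _ hθK).trans (by gcongr; linarith)))
      (fun l => F_bound hA0 hY hC₀ hr hρ hωN
        ((ba1 l _ hr1 _ hθK).trans (by
          rw [← hX, show -(1 + μ) = -(1:ℝ) - μ by ring]
          gcongr; linarith))
        (fun k => (ba3 (k, l) _ hr1 _ hθK).trans (by gcongr; linarith))
        (fun j k => (ba5 (j, k, l) _ hr1 _ hθK).trans (by gcongr; linarith)))
      (fun l => sum_bound _ _ fun k => by
        rw [abs_mul]
        exact mul_le_mul ((hb0 (l, k) _ hθK).trans (by linarith)) (coord_le _ _)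
          (abs_nonneg _) hH0.le)
      (fun l => quad_bound hH0.le rfl fun j k => (hb1 (j, k, l) _ hθK).trans (by linarith))
    have hN2 : 1 + ‖ω t‖ ^ 2 ≤
        (1 + l⁻¹) * (1 + ∑ j, ∑ k, c.hM (θ t) j k * ω t j * ω t k) := N_bound hl (hLnn t ht)
    refine Eq.trans_le ?_ (hEq.trans ?_)
    · congr 1
      refine Finset.sum_congr rfl fun l _ => ?_
      rw [pdOmega_eq c _ _ _ _ (hKU hθK), pdTheta_eq c hU _ hr _ _ _ (hKU hθK)]
      ring
    · rw [hX]
      calc _ ≤ c₁ * ((r t) ^ (-μ) / r t) *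
            ((1 + l⁻¹) * (1 + ∑ j, ∑ k, c.hM (θ t) j k * ω t j * ω t k)) := by gcongr
        _ ≤ (c₁ + 1) * ((r t) ^ (-μ) / r t) *
            ((1 + l⁻¹) * (1 + ∑ j, ∑ k, c.hM (θ t) j k * ω t j * ω t k)) := by
          have : 0 ≤ (1 + l⁻¹) * (1 + ∑ j, ∑ k, c.hM (θ t) j k * ω t j * ω t k) :=
            le_trans (by positivity) hN2
          gcongr
          linarith
        _ = _ := by ring
  have hCpos : 0 < (c₁ + 1) * (1 + l⁻¹) := by positivity
  refine ⟨_, hCpos, main, ?_⟩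
  obtain ⟨B, hB⟩ := gronwall hμ.1 hc₀ hCpos r _ (fun t ht => (hdom t ht).2.2.1)
    (fun t ht => le_trans (by positivity) (hLnn t ht)) main
  refine ⟨max B (Real.sqrt m * Real.sqrt (B / l)), fun t ht => ⟨le_max_of_le_left (hB t ht), ?_⟩⟩
  refine le_max_of_le_right ((eNorm_le _).trans ?_)
  gcongr
  refine Real.le_sqrt_of_sq_le ?_
  rw [le_div_iff₀ hl]
  have := hLnn t ht
  have := hB t ht
  linarith

end Scattering
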